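/- Spectral inequality for disjoint subsets of the circle: let Γ₁ and Γ₂ be disjoint nonempty open subsets of the unit circle S¹ ⊆ ℝ², neither of which is all of S¹, and for i = 1, 2 let μᵢ = inf { ∫_{S¹} |v′|² dθ / ∫_{S¹} v² dθ : v ∈ H¹(S¹), v ≢ 0, v = 0 on S¹ \ Γᵢ } denote the first Dirichlet eigenvalue of −d²/dθ² on Γᵢ. Then √μ₁ + √μ₂ ≥ 2, with the minimum attained when Γ₁ and Γ₂ are two adjacent complementary arcs of lengths 2πα and 2π(1−α), for which the sum equals 1/(2α) + 1/(2(1−α)) ≥ 2. -/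

import Mathlib

open MeasureTheory Set

noncomputable section

/-- The first Dirichlet eigenvalue of `-d²/dθ²` on a (2π-periodic) subset `Γ` of the circle,
as the infimum of the Rayleigh quotient over `C¹` periodic functions vanishing off `Γ`. -/
def circEigen (Γ : Set ℝ) : ℝ :=
  sInf {t : ℝ | ∃ v : ℝ → ℝ, ContDiff ℝ 1 v ∧ (∀ θ, v (θ + 2 * Real.pi) = v θ) ∧
    (∀ θ, θ ∉ Γ → v θ = 0) ∧ (∫ θ in (0 : ℝ)..(2 * Real.pi), (v θ) ^ 2) ≠ 0 ∧
    t = (∫ θ in (0 : ℝ)..(2 * Real.pi), (deriv v θ) ^ 2) /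
      ∫ θ in (0 : ℝ)..(2 * Real.pi), (v θ) ^ 2}


lemma hasDerivAt_mul_zero {v h : ℝ → ℝ} {v' x : ℝ} (hv : HasDerivAt v v' x) (h0 : v x = 0)
    (hh : ContinuousAt h x) : HasDerivAt (fun y => v y * h y) (v' * h x) x := by
  rw [hasDerivAt_iff_tendsto_slope] at hv ⊢
  refine (hv.mul (hh.tendsto.mono_left nhdsWithin_le_nhds)).congr (fun y => ?_)
  simp only [slope_def_field, h0]
  ring

lemma lower_key (Γ : Set ℝ) (hopen : IsOpen Γ)
    (hper : ∀ θ, θ ∈ Γ ↔ θ + 2 * Real.pi ∈ Γ) (hproper : Γ ≠ Set.univ)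
    (k : ℝ) (hk : 0 ≤ k)
    (hkm : k * (∫ θ in (0 : ℝ)..(2 * Real.pi), Γ.indicator (fun _ => (1 : ℝ)) θ) < Real.pi)
    (v : ℝ → ℝ) (hv : ContDiff ℝ 1 v) (hvp : ∀ θ, v (θ + 2 * Real.pi) = v θ)
    (hv0 : ∀ θ, θ ∉ Γ → v θ = 0) :
    k ^ 2 * (∫ θ in (0 : ℝ)..(2 * Real.pi), (v θ) ^ 2) ≤
      ∫ θ in (0 : ℝ)..(2 * Real.pi), (deriv v θ) ^ 2 := by
  obtain ⟨a, ha⟩ : ∃ a, a ∉ Γ := by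
    by_contra! h
    exact hproper (eq_univ_of_forall h)
  set χ : ℝ → ℝ := Γ.indicator (fun _ => (1 : ℝ)) with hχ
  have hpi := Real.pi_pos
  have hvc : Continuous v := hv.continuous
  have hv' : Continuous (deriv v) := hv.continuous_deriv le_rfl
  have hvd : ∀ x, HasDerivAt v (deriv v x) x := fun x =>
    (hv.differentiable one_ne_zero x).hasDerivAt
  have hdp : ∀ θ, deriv v (θ + 2 * Real.pi) = deriv v θ := by
    intro θ
    rw [← deriv_comp_add_const]
    congr 1
    exact funext hvp
  have hχp : Function.Periodic χ (2 * Real.pi) := by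
    intro θ
    simp only [hχ, indicator]
    by_cases h : θ ∈ Γ
    · simp [h, (hper θ).1 h]
    · have : θ + 2 * Real.pi ∉ Γ := fun h' => h ((hper θ).2 h')
      simp [h, this]
  have e1 := hχp.intervalIntegral_add_eq 0 a
  have e2 := (show Function.Periodic (fun θ => v θ ^ 2) (2 * Real.pi) from
    fun θ => by simp only [hvp]).intervalIntegral_add_eq 0 a
  have e3 := (show Function.Periodic (fun θ => deriv v θ ^ 2) (2 * Real.pi) from
    fun θ => by simp only [hdp]).intervalIntegral_add_eq 0 a
  rw [zero_add] at e1 e2 e3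
  rw [e1] at hkm
  rw [e2, e3]
  set b := a + 2 * Real.pi with hb
  have hab : a ≤ b := by linarith
  have hbΓ : b ∉ Γ := fun h => ha ((hper a).2 h)
  have hχm : Measurable χ := measurable_const.indicator hopen.measurableSet
  have hχ0 : ∀ x, 0 ≤ χ x := fun x => indicator_nonneg (fun _ _ => zero_le_one) x
  have hχ1 : ∀ x, χ x ≤ 1 := fun x => by
    simp only [hχ, indicator]; split_ifs <;> norm_num
  have hχi : ∀ c d, IntervalIntegrable χ volume c d := by
    intro c d
    refine (intervalIntegrable_const (c := (1:ℝ))).mono_fun hχm.aestronglyMeasurable ?_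
    refine Filter.Eventually.of_forall fun x => ?_
    show ‖χ x‖ ≤ ‖(1:ℝ)‖
    rw [Real.norm_of_nonneg (hχ0 x)]; simpa using hχ1 x
  set m := ∫ θ in a..b, χ θ with hm
  set T : ℝ → ℝ := fun x => k * ((∫ θ in a..x, χ θ) - m / 2) with hT
  have hTc : Continuous T := by
    have := intervalIntegral.continuous_primitive hχi a
    fun_prop
  have hTd : ∀ x ∈ Γ, HasDerivAt T k x := by
    intro x hx
    have hc : ContinuousAt χ x := by
      have : χ =ᶠ[nhds x] fun _ => 1 := by
        filter_upwards [hopen.mem_nhds hx] with y hy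
        simp [hχ, hy]
      exact continuousAt_const.congr this.symm
    have := intervalIntegral.integral_hasDerivAt_right (hχi a x)
      (hχm.stronglyMeasurable.stronglyMeasurableAtFilter) hc
    have h2 := (this.sub_const (m/2)).const_mul k
    simpa [hχ, hx] using h2
  have hcos : ∀ x ∈ Icc a b, 0 < Real.cos (T x) := by
    intro x hx
    have h1 : 0 ≤ ∫ θ in a..x, χ θ := intervalIntegral.integral_nonneg hx.1 fun y _ => hχ0 y
    have h2 : 0 ≤ ∫ θ in x..b, χ θ := intervalIntegral.integral_nonneg hx.2 fun y _ => hχ0 y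
    have h3 : (∫ θ in a..x, χ θ) + ∫ θ in x..b, χ θ = m :=
      intervalIntegral.integral_add_adjacent_intervals (hχi _ _) (hχi _ _)
    apply Real.cos_pos_of_mem_Ioo
    constructor
    · simp only [hT]; nlinarith
    · simp only [hT]; nlinarith
  set F : ℝ → ℝ := fun x => -k * Real.tan (T x) * v x ^ 2 with hF
  set F' : ℝ → ℝ := fun x => -k ^ 2 * (1 + Real.tan (T x) ^ 2) * v x ^ 2
    - 2 * k * Real.tan (T x) * v x * deriv v x with hF'
  have htc : ∀ x ∈ Icc a b, ContinuousAt (fun y => Real.tan (T y)) x := fun x hx =>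
    ContinuousAt.comp (f := T) (Real.continuousAt_tan.2 (hcos x hx).ne') hTc.continuousAt
  have hFd : ∀ x ∈ uIcc a b, HasDerivAt F (F' x) x := by
    intro x hx
    rw [uIcc_of_le hab] at hx
    by_cases hxΓ : x ∈ Γ
    · have h1 := (Real.hasDerivAt_tan (hcos x hx).ne').comp x (hTd x hxΓ)
      have h2 := (h1.const_mul (-k)).mul ((hvd x).pow 2)
      refine HasDerivAt.congr_deriv (f := F) h2 ?_
      simp only [hF', Function.comp, Pi.pow_apply]
      rw [← Real.inv_one_add_tan_sq (hcos x hx).ne']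
      field_simp
      ring
    · have h0 := hv0 x hxΓ
      have h1 := hasDerivAt_mul_zero (hvd x) h0
        (h := fun y => -k * Real.tan (T y) * v y)
        ((continuousAt_const.mul (htc x hx)).mul hvc.continuousAt)
      rw [show F = fun y => v y * (-k * Real.tan (T y) * v y) from
        funext fun y => by simp only [hF]; ring]
      refine h1.congr_deriv ?_
      simp [hF', h0]
  have hF'c : ContinuousOn F' (uIcc a b) := by
    intro x hx
    rw [uIcc_of_le hab] at hx
    apply ContinuousAt.continuousWithinAt
    have := htc x hx
    have := hvc.continuousAt (x := x)
    have := hv'.continuousAt (x := x)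
    simp only [hF']
    fun_prop
  have hI := intervalIntegral.integral_eq_sub_of_hasDerivAt hFd hF'c.intervalIntegrable
  have hFz : F b - F a = 0 := by simp [hF, hv0 a ha, hv0 b hbΓ]
  rw [hFz] at hI
  have i1 : IntervalIntegrable (fun θ => v θ ^ 2) volume a b :=
    (hvc.pow 2).intervalIntegrable _ _
  have i2 : IntervalIntegrable (fun θ => deriv v θ ^ 2) volume a b :=
    (hv'.pow 2).intervalIntegrable _ _
  have hle : ∫ θ in a..b, (k ^ 2 * v θ ^ 2 + F' θ) ≤ ∫ θ in a..b, deriv v θ ^ 2 := by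
    refine intervalIntegral.integral_mono_on hab
      ((i1.const_mul _).add hF'c.intervalIntegrable) i2 fun x _ => ?_
    simp only [hF']
    nlinarith [sq_nonneg (deriv v x + k * Real.tan (T x) * v x)]
  rw [intervalIntegral.integral_add (i1.const_mul _) hF'c.intervalIntegrable, hI,
    intervalIntegral.integral_const_mul] at hle
  linarith

def Gf (ε s : ℝ) : ℝ := s * (max s 0 / (max s 0 + ε))

lemma Gf_deriv {ε : ℝ} (hε : 0 < ε) (s : ℝ) :
    HasDerivAt (Gf ε) (1 - ε ^ 2 / (max s 0 + ε) ^ 2) s := by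
  rcases lt_trichotomy s 0 with h | h | h
  · have : Gf ε =ᶠ[nhds s] fun _ => 0 := by
      filter_upwards [Iio_mem_nhds h] with y hy
      simp [Gf, max_eq_right (le_of_lt (show y < 0 from hy))]
    refine ((hasDerivAt_const s (0:ℝ)).congr_of_eventuallyEq this).congr_deriv ?_
    rw [max_eq_right h.le]
    field_simp; ring
  · subst h
    have := hasDerivAt_mul_zero (hasDerivAt_id (0:ℝ)) rfl
      (h := fun s => max s 0 / (max s 0 + ε)) (by
        apply ContinuousAt.div (by fun_prop) (by fun_prop)
        simp [hε.ne'])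
    refine HasDerivAt.congr_deriv (f := Gf ε) this ?_
    simp [hε.ne']
  · have : Gf ε =ᶠ[nhds s] fun y => y ^ 2 / (y + ε) := by
      filter_upwards [Ioi_mem_nhds h] with y hy
      simp only [Gf, max_eq_left (le_of_lt (show 0 < y from hy))]
      ring
    have hd := ((hasDerivAt_id s).pow 2).div ((hasDerivAt_id s).add_const ε)
      (by simp; positivity)
    refine (HasDerivAt.congr_of_eventuallyEq hd this).congr_deriv ?_
    rw [max_eq_left h.le]
    have : s + ε ≠ 0 := by positivity
    simp
    field_simp; ring

lemma Gf_contDiff {ε : ℝ} (hε : 0 < ε) : ContDiff ℝ 1 (Gf ε) := by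
  rw [contDiff_one_iff_deriv]
  refine ⟨fun s => (Gf_deriv hε s).differentiableAt, ?_⟩
  rw [show deriv (Gf ε) = _ from funext fun s => (Gf_deriv hε s).deriv]
  have : ∀ s : ℝ, (max s 0 + ε) ^ 2 ≠ 0 := fun s => by positivity
  fun_prop (disch := assumption)

lemma Gf_nonpos {ε s : ℝ} (hs : s ≤ 0) : Gf ε s = 0 := by
  simp [Gf, max_eq_right hs]

lemma Gf_sq {ε s : ℝ} (hε : 0 < ε) (hs : 0 ≤ s) : s ^ 2 - 2 * ε * s ≤ Gf ε s ^ 2 := by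
  simp only [Gf, max_eq_left hs]
  have h : 0 < s + ε := by positivity
  rw [show (s * (s / (s + ε))) ^ 2 = s ^ 4 / (s + ε) ^ 2 by field_simp, le_div_iff₀ (by positivity)]
  have : 0 ≤ s * ε ^ 3 := by positivity
  nlinarith [sq_nonneg (s * ε)]

def vz (a b ε x : ℝ) : ℝ :=
  if x ∈ Icc a b then Gf ε (Real.sin (Real.pi / (b - a) * (x - a))) else 0

lemma vz_eq {a b ε : ℝ} (hab : a < b) {x : ℝ} (hx : x ∈ Ioo (a - (b - a)) (b + (b - a))) :
    vz a b ε x = Gf ε (Real.sin (Real.pi / (b - a) * (x - a))) := by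
  unfold vz
  have hpi := Real.pi_pos
  have hL : 0 < b - a := by linarith
  split_ifs with h
  · rfl
  · symm
    apply Gf_nonpos
    by_cases hxa : x < a
    · apply Real.sin_nonpos_of_nonpos_of_neg_pi_le
      · exact mul_nonpos_of_nonneg_of_nonpos (by positivity) (by linarith)
      · rw [div_mul_eq_mul_div, le_div_iff₀ hL]
        nlinarith [hx.1]
    · have hxb : b < x := by
        by_contra! h'
        exact h ⟨not_lt.1 hxa, h'⟩
      rw [← Real.sin_sub_two_pi]
      apply Real.sin_nonpos_of_nonpos_of_neg_pi_le
      · rw [div_mul_eq_mul_div, sub_nonpos, div_le_iff₀ hL]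
        nlinarith [hx.2]
      · rw [div_mul_eq_mul_div, le_sub_iff_add_le, le_div_iff₀ hL]
        nlinarith [hx.2]

lemma vz_zero {a b ε x : ℝ} (hab : a < b) (hx : x ∉ Ioo a b) : vz a b ε x = 0 := by
  unfold vz
  split_ifs with h
  · have hL : b - a ≠ 0 := by linarith
    rcases eq_or_lt_of_le h.1 with h1 | h1
    · subst h1; simp [Gf]
    · rcases eq_or_lt_of_le h.2 with h2 | h2
      · subst h2
        rw [div_mul_cancel₀ _ hL]; simp [Gf]
      · exact absurd ⟨h1, h2⟩ hx
  · rfl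

lemma vz_contDiff {a b ε : ℝ} (hε : 0 < ε) (hab : a < b) : ContDiff ℝ 1 (vz a b ε) := by
  rw [contDiff_iff_contDiffAt]
  intro x
  by_cases hx : x ∈ Ioo (a - (b - a)) (b + (b - a))
  · have : vz a b ε =ᶠ[nhds x] fun x => Gf ε (Real.sin (Real.pi / (b - a) * (x - a))) := by
      filter_upwards [isOpen_Ioo.mem_nhds hx] with y hy using vz_eq hab hy
    refine ContDiffAt.congr_of_eventuallyEq ?_ this
    have h := Gf_contDiff hε
    exact (h.comp (Real.contDiff_sin.comp (by fun_prop))).contDiffAt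
  · have hx' : x ∈ (Icc a b)ᶜ := by
      intro h
      exact hx ⟨by linarith [h.1], by linarith [h.2]⟩
    have : vz a b ε =ᶠ[nhds x] fun _ => 0 := by
      filter_upwards [isClosed_Icc.isOpen_compl.mem_nhds hx'] with y hy
      exact vz_zero hab fun h => hy ⟨h.1.le, h.2.le⟩
    exact contDiffAt_const.congr_of_eventuallyEq this

def vp (a b ε x : ℝ) : ℝ := vz a b ε (x - 2 * Real.pi * ⌊(x - a) / (2 * Real.pi)⌋)

lemma vp_local {a b ε : ℝ} (hab : a < b) (hb : b ≤ a + 2 * Real.pi) (n : ℤ) {y : ℝ}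
    (hy : y ∈ Ioo (a + 2 * Real.pi * (n - 1)) (a + 2 * Real.pi * (n + 1))) :
    vp a b ε y = vz a b ε (y - 2 * Real.pi * (n - 1)) + vz a b ε (y - 2 * Real.pi * n) := by
  have hpi := Real.pi_pos
  by_cases h : a + 2 * Real.pi * n ≤ y
  · have hf : ⌊(y - a) / (2 * Real.pi)⌋ = n := by
      rw [Int.floor_eq_iff, le_div_iff₀ (by positivity), div_lt_iff₀ (by positivity)]
      constructor <;> nlinarith [hy.2]
    rw [vp, hf, vz_zero (x := y - 2 * Real.pi * (n - 1)) hab, zero_add]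
    intro h'
    nlinarith [h'.2]
  · have hf : ⌊(y - a) / (2 * Real.pi)⌋ = n - 1 := by
      rw [Int.floor_eq_iff, le_div_iff₀ (by positivity), div_lt_iff₀ (by positivity)]
      push_cast
      constructor <;> nlinarith [hy.1]
    rw [vp, hf, vz_zero (x := y - 2 * Real.pi * n) hab, add_zero]
    · push_cast; rfl
    intro h'
    nlinarith [h'.1]

lemma vp_contDiff {a b ε : ℝ} (hε : 0 < ε) (hab : a < b) (hb : b ≤ a + 2 * Real.pi) :
    ContDiff ℝ 1 (vp a b ε) := by
  have hpi := Real.pi_pos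
  rw [contDiff_iff_contDiffAt]
  intro x
  obtain ⟨n, hn⟩ : ∃ n : ℤ, n = ⌊(x - a) / (2 * Real.pi)⌋ := ⟨_, rfl⟩
  have h1 := Int.floor_le ((x - a) / (2 * Real.pi))
  have h2 := Int.lt_floor_add_one ((x - a) / (2 * Real.pi))
  rw [← hn] at h1 h2
  rw [le_div_iff₀ (by positivity)] at h1
  rw [div_lt_iff₀ (by positivity)] at h2
  have hx : x ∈ Ioo (a + 2 * Real.pi * (n - 1)) (a + 2 * Real.pi * (n + 1)) := by
    constructor <;> nlinarith
  have : vp a b ε =ᶠ[nhds x] fun y =>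
      vz a b ε (y - 2 * Real.pi * (n - 1)) + vz a b ε (y - 2 * Real.pi * n) := by
    filter_upwards [isOpen_Ioo.mem_nhds hx] with y hy using vp_local hab hb n hy
  refine ContDiffAt.congr_of_eventuallyEq ?_ this
  have h := vz_contDiff hε hab
  exact ((h.comp (contDiff_id.sub contDiff_const)).add
    (h.comp (contDiff_id.sub contDiff_const))).contDiffAt

lemma vp_periodic (a b ε x : ℝ) : vp a b ε (x + 2 * Real.pi) = vp a b ε x := by
  have hpi := Real.pi_pos
  have : (x + 2 * Real.pi - a) / (2 * Real.pi) = (x - a) / (2 * Real.pi) + 1 := by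
    field_simp; ring
  unfold vp
  rw [this, Int.floor_add_one]
  push_cast
  congr 1; ring

lemma vp_fund {a b ε : ℝ} (hab : a < b) (hb : b ≤ a + 2 * Real.pi) {x : ℝ}
    (hx : x ∈ Ioo a (a + 2 * Real.pi)) : vp a b ε x = vz a b ε x := by
  have hpi := Real.pi_pos
  rw [vp_local hab hb 0 (by constructor <;> push_cast <;> linarith [hx.1, hx.2]),
    vz_zero hab, zero_add]
  · push_cast; congr 1; ring
  · intro h'
    have := h'.2
    push_cast at this
    linarith [hx.1]

lemma sin_int {a b : ℝ} (hab : a < b) :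
    ∫ x in a..b, Real.sin (Real.pi / (b - a) * (x - a)) ^ 2 = (b - a) / 2 := by
  have hL : b - a ≠ 0 := by linarith
  have hpi := Real.pi_pos.ne'
  have h := intervalIntegral.integral_comp_sub_right (a := a) (b := b)
    (fun x => Real.sin (Real.pi / (b - a) * x) ^ 2) a
  rw [h, intervalIntegral.integral_comp_mul_left (fun x => Real.sin x ^ 2) (by positivity),
    integral_sin_sq, div_mul_cancel₀ _ hL]
  simp
  field_simp

lemma cos_int {a b : ℝ} (hab : a < b) :
    ∫ x in a..b, Real.cos (Real.pi / (b - a) * (x - a)) ^ 2 = (b - a) / 2 := by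
  have hL : b - a ≠ 0 := by linarith
  have hpi := Real.pi_pos.ne'
  have h := intervalIntegral.integral_comp_sub_right (a := a) (b := b)
    (fun x => Real.cos (Real.pi / (b - a) * x) ^ 2) a
  rw [h, intervalIntegral.integral_comp_mul_left (fun x => Real.cos x ^ 2) (by positivity),
    integral_cos_sq, div_mul_cancel₀ _ hL]
  simp
  field_simp

lemma vp_sq_int {a b ε : ℝ} (hε : 0 < ε) (hab : a < b) (hb : b ≤ a + 2 * Real.pi) :
    (b - a) / 2 - 2 * ε * (b - a) ≤ ∫ θ in (0 : ℝ)..(2 * Real.pi), (vp a b ε θ) ^ 2 := by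
  have hL : 0 < b - a := by linarith
  have hpi := Real.pi_pos
  have hc := (vp_contDiff hε hab hb).continuous
  have e2 := (show Function.Periodic (fun θ => vp a b ε θ ^ 2) (2 * Real.pi) from
    fun θ => by simp only [vp_periodic]).intervalIntegral_add_eq 0 a
  rw [zero_add] at e2
  rw [e2]
  have i : ∀ c d, IntervalIntegrable (fun θ => vp a b ε θ ^ 2) volume c d :=
    fun c d => (hc.pow 2).intervalIntegrable _ _
  rw [← intervalIntegral.integral_add_adjacent_intervals (i a b) (i b _)]
  have h1 : 0 ≤ ∫ θ in b..(a + 2 * Real.pi), vp a b ε θ ^ 2 :=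
    intervalIntegral.integral_nonneg hb fun _ _ => sq_nonneg _
  have h2 : ∫ θ in a..b, (Real.sin (Real.pi / (b - a) * (θ - a)) ^ 2 - 2 * ε) ≤
      ∫ θ in a..b, vp a b ε θ ^ 2 := by
    refine intervalIntegral.integral_mono_on_of_le_Ioo hab.le
      (Continuous.intervalIntegrable (by fun_prop) _ _) (i _ _) fun x hx => ?_
    rw [vp_fund hab hb ⟨hx.1, by linarith [hx.2]⟩,
      vz_eq hab ⟨by linarith [hx.1], by linarith [hx.2]⟩]
    refine le_trans ?_ (Gf_sq hε ?_)
    · nlinarith [Real.sin_le_one (Real.pi / (b - a) * (x - a))]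
    · apply Real.sin_nonneg_of_nonneg_of_le_pi
      · exact mul_nonneg (by positivity) (by linarith [hx.1])
      · rw [div_mul_eq_mul_div, div_le_iff₀ hL]
        nlinarith [hx.2]
  rw [intervalIntegral.integral_sub (Continuous.intervalIntegrable (by fun_prop) _ _)
    (by simp), sin_int hab, intervalIntegral.integral_const, smul_eq_mul] at h2
  linarith

lemma vp_deriv_int {a b ε : ℝ} (hε : 0 < ε) (hab : a < b) (hb : b ≤ a + 2 * Real.pi) :
    ∫ θ in (0 : ℝ)..(2 * Real.pi), (deriv (vp a b ε) θ) ^ 2 ≤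
      (Real.pi / (b - a)) ^ 2 * ((b - a) / 2) := by
  have hL : 0 < b - a := by linarith
  have hpi := Real.pi_pos
  have hc := (vp_contDiff hε hab hb).continuous_deriv le_rfl
  have hdp : ∀ θ, deriv (vp a b ε) (θ + 2 * Real.pi) = deriv (vp a b ε) θ := by
    intro θ
    rw [← deriv_comp_add_const]
    congr 1
    exact funext (vp_periodic a b ε)
  have e2 := (show Function.Periodic (fun θ => deriv (vp a b ε) θ ^ 2) (2 * Real.pi) from
    fun θ => by simp only [hdp]).intervalIntegral_add_eq 0 a
  rw [zero_add] at e2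
  rw [e2]
  have i : ∀ c d, IntervalIntegrable (fun θ => deriv (vp a b ε) θ ^ 2) volume c d :=
    fun c d => (hc.pow 2).intervalIntegrable _ _
  rw [← intervalIntegral.integral_add_adjacent_intervals (i a b) (i b _)]
  have h1 : ∫ θ in b..(a + 2 * Real.pi), deriv (vp a b ε) θ ^ 2 = 0 := by
    rw [intervalIntegral.integral_congr_Ioo_of_le (g := fun _ => 0) hb]
    · simp
    · intro x hx
      have : vp a b ε =ᶠ[nhds x] fun _ => 0 := by
        filter_upwards [isOpen_Ioo.mem_nhds hx] with y hy
        rw [vp_fund hab hb ⟨by linarith [hy.1], hy.2⟩, vz_zero hab]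
        intro h; linarith [h.2, hy.1]
      simp [this.deriv_eq]
  have h2 : ∫ θ in a..b, deriv (vp a b ε) θ ^ 2 ≤
      ∫ θ in a..b, (Real.pi / (b - a)) ^ 2 * Real.cos (Real.pi / (b - a) * (θ - a)) ^ 2 := by
    refine intervalIntegral.integral_mono_on_of_le_Ioo hab.le (i _ _)
      (Continuous.intervalIntegrable (by fun_prop) _ _) fun x hx => ?_
    have : vp a b ε =ᶠ[nhds x] fun x => Gf ε (Real.sin (Real.pi / (b - a) * (x - a))) := by
      filter_upwards [isOpen_Ioo.mem_nhds hx] with y hy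
      rw [vp_fund hab hb ⟨hy.1, by linarith [hy.2]⟩,
        vz_eq hab ⟨by linarith [hy.1], by linarith [hy.2]⟩]
    have hd : HasDerivAt (fun x => Real.sin (Real.pi / (b - a) * (x - a)))
        (Real.cos (Real.pi / (b - a) * (x - a)) * (Real.pi / (b - a) * 1)) x :=
      (((hasDerivAt_id x).sub_const a).const_mul (Real.pi / (b - a))).sin
    have hg := (Gf_deriv hε (Real.sin (Real.pi / (b - a) * (x - a)))).comp x hd
    rw [this.deriv_eq, show deriv (fun x => Gf ε (Real.sin (Real.pi / (b - a) * (x - a)))) x = _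
      from hg.deriv]
    set q := ε ^ 2 / (max (Real.sin (Real.pi / (b - a) * (x - a))) 0 + ε) ^ 2
    have hq0 : 0 ≤ q := by positivity
    have hq1 : q ≤ 1 := by
      apply div_le_one_of_le₀ _ (by positivity)
      gcongr
      linarith [le_max_right (Real.sin (Real.pi / (b - a) * (x - a))) 0]
    have : (1 - q) ^ 2 ≤ 1 := by nlinarith
    calc _ = (1 - q) ^ 2 * ((Real.pi / (b - a)) ^ 2 *
          Real.cos (Real.pi / (b - a) * (x - a)) ^ 2) := by ring
      _ ≤ 1 * _ := by gcongr
      _ = _ := one_mul _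
  rw [intervalIntegral.integral_const_mul, cos_int hab] at h2
  linarith

abbrev raySet (Γ : Set ℝ) : Set ℝ :=
  {t : ℝ | ∃ v : ℝ → ℝ, ContDiff ℝ 1 v ∧ (∀ θ, v (θ + 2 * Real.pi) = v θ) ∧
    (∀ θ, θ ∉ Γ → v θ = 0) ∧ (∫ θ in (0 : ℝ)..(2 * Real.pi), (v θ) ^ 2) ≠ 0 ∧
    t = (∫ θ in (0 : ℝ)..(2 * Real.pi), (deriv v θ) ^ 2) /
      ∫ θ in (0 : ℝ)..(2 * Real.pi), (v θ) ^ 2}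

lemma ray_nonneg (Γ : Set ℝ) : ∀ t ∈ raySet Γ, 0 ≤ t := by
  rintro t ⟨v, -, -, -, -, rfl⟩
  have hpi := Real.pi_pos
  exact div_nonneg (intervalIntegral.integral_nonneg (by positivity) fun _ _ => sq_nonneg _)
    (intervalIntegral.integral_nonneg (by positivity) fun _ _ => sq_nonneg _)

lemma ray_arc {Γ : Set ℝ} {a b : ℝ} (hab : a < b) (hb : b ≤ a + 2 * Real.pi)
    (hΓ : ∀ x ∈ Ioo a b, ∀ n : ℤ, x + 2 * Real.pi * n ∈ Γ) {ε : ℝ} (hε : 0 < ε) (hε' : ε < 1 / 4) :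
    ∃ t ∈ raySet Γ, t ≤ (Real.pi / (b - a)) ^ 2 / (1 - 4 * ε) := by
  have hL : 0 < b - a := by linarith
  have h1 := vp_sq_int hε hab hb
  have h2 := vp_deriv_int hε hab hb
  have h3 : 0 < (b - a) / 2 - 2 * ε * (b - a) := by nlinarith
  refine ⟨_, ⟨vp a b ε, vp_contDiff hε hab hb, vp_periodic a b ε, ?_, (h3.trans_le h1).ne', rfl⟩, ?_⟩
  · intro θ hθ
    apply vz_zero hab
    intro h
    apply hθ
    have := hΓ _ h ⌊(θ - a) / (2 * Real.pi)⌋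
    simpa using this
  · calc _ ≤ ((Real.pi / (b - a)) ^ 2 * ((b - a) / 2)) / ((b - a) / 2 - 2 * ε * (b - a)) := by
          gcongr
      _ = _ := by
        have : 1 - 4 * ε ≠ 0 := by linarith
        rw [show (b - a) / 2 - 2 * ε * (b - a) = ((b - a) / 2) * (1 - 4 * ε) by ring]
        field_simp

lemma eigen_upper {Γ : Set ℝ} {a b : ℝ} (hab : a < b) (hb : b ≤ a + 2 * Real.pi)
    (hΓ : ∀ x ∈ Ioo a b, ∀ n : ℤ, x + 2 * Real.pi * n ∈ Γ) :
    Real.sqrt (circEigen Γ) ≤ Real.pi / (b - a) := by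
  have hL : 0 < b - a := by linarith
  have hpi := Real.pi_pos
  refine Real.sqrt_le_iff.2 ⟨by positivity, ?_⟩
  have key : ∀ ε : ℝ, 0 < ε → ε < 1 / 4 →
      circEigen Γ ≤ (Real.pi / (b - a)) ^ 2 / (1 - 4 * ε) := by
    intro ε h1 h2
    obtain ⟨t, ht, hle⟩ := ray_arc hab hb hΓ h1 h2
    exact (csInf_le ⟨0, ray_nonneg Γ⟩ ht).trans hle
  have ht : Filter.Tendsto (fun ε : ℝ => (Real.pi / (b - a)) ^ 2 / (1 - 4 * ε))
      (nhdsWithin 0 (Ioi 0)) (nhds ((Real.pi / (b - a)) ^ 2 / (1 - 4 * 0))) := by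
    apply Filter.Tendsto.mono_left _ nhdsWithin_le_nhds
    apply ContinuousAt.tendsto (f := fun ε : ℝ => (Real.pi / (b - a)) ^ 2 / (1 - 4 * ε))
    exact ContinuousAt.div (by fun_prop) (by fun_prop) (by norm_num)
  rw [mul_zero, sub_zero, div_one] at ht
  refine ge_of_tendsto ht ?_
  filter_upwards [Ioo_mem_nhdsGT (show (0:ℝ) < 1 / 4 by norm_num)] with ε hε
  exact key ε hε.1 hε.2

lemma per_int {Γ : Set ℝ} (hper : ∀ θ, θ ∈ Γ ↔ θ + 2 * Real.pi ∈ Γ) {x : ℝ} (hx : x ∈ Γ) (n : ℤ) :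
    x + 2 * Real.pi * n ∈ Γ := by
  have h : Function.Periodic (fun θ => θ ∈ Γ) (2 * Real.pi) := fun θ => propext (hper θ).symm
  have := h.int_mul n x
  rw [mul_comm]
  exact this.symm ▸ hx

lemma ray_nonempty {Γ : Set ℝ} (hopen : IsOpen Γ)
    (hper : ∀ θ, θ ∈ Γ ↔ θ + 2 * Real.pi ∈ Γ) (hne : Γ.Nonempty) : (raySet Γ).Nonempty := by
  have hpi := Real.pi_pos
  obtain ⟨x, hx⟩ := hne
  obtain ⟨δ, hδ, hb⟩ := Metric.isOpen_iff.1 hopen x hx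
  obtain ⟨t, ht, -⟩ := ray_arc (Γ := Γ) (a := x) (b := x + min δ Real.pi) (ε := 1 / 8)
    (by have := lt_min hδ hpi; linarith) (by have := min_le_right δ Real.pi; linarith)
    (fun y hy n => per_int hper (hb (by
      rw [Metric.mem_ball, Real.dist_eq, abs_lt]
      have := min_le_left δ Real.pi
      constructor <;> linarith [hy.1, hy.2])) n) (by norm_num) (by norm_num)
  exact ⟨t, ht⟩

lemma eigen_lower {Γ : Set ℝ} (hopen : IsOpen Γ)
    (hper : ∀ θ, θ ∈ Γ ↔ θ + 2 * Real.pi ∈ Γ) (hne : Γ.Nonempty) (hproper : Γ ≠ Set.univ) :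
    Real.pi ≤ Real.sqrt (circEigen Γ) *
      (∫ θ in (0 : ℝ)..(2 * Real.pi), Γ.indicator (fun _ => (1 : ℝ)) θ) := by
  have hpi := Real.pi_pos
  set m := ∫ θ in (0 : ℝ)..(2 * Real.pi), Γ.indicator (fun _ => (1 : ℝ)) θ with hm
  have hm0 : 0 ≤ m := intervalIntegral.integral_nonneg (by positivity)
    fun x _ => indicator_nonneg (fun _ _ => zero_le_one) x
  by_contra! hlt
  set s := Real.sqrt (circEigen Γ) with hs
  have hs0 : 0 ≤ s := Real.sqrt_nonneg _
  obtain ⟨k, hk, hkm⟩ : ∃ k, s < k ∧ k * m < Real.pi := by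
    refine ⟨s + (Real.pi - s * m) / (2 * (m + 1)), ?_, ?_⟩
    · have : 0 < (Real.pi - s * m) / (2 * (m + 1)) := div_pos (by linarith) (by positivity)
      linarith
    · have : (Real.pi - s * m) / (2 * (m + 1)) * m < Real.pi - s * m := by
        rw [div_mul_eq_mul_div, div_lt_iff₀ (by positivity)]
        nlinarith
      linarith
  have hk2 : k ^ 2 ≤ circEigen Γ := by
    refine le_csInf (ray_nonempty hopen hper hne) ?_
    rintro t ⟨v, h1, h2, h3, h4, rfl⟩
    have hpos : 0 < ∫ θ in (0 : ℝ)..(2 * Real.pi), (v θ) ^ 2 :=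
      lt_of_le_of_ne (intervalIntegral.integral_nonneg (by positivity) fun _ _ => sq_nonneg _)
        h4.symm
    rw [le_div_iff₀ hpos]
    exact lower_key Γ hopen hper hproper k (by linarith) hkm v h1 h2 h3
  have := Real.le_sqrt_of_sq_le hk2
  linarith

lemma ind_ii {Γ : Set ℝ} (hopen : IsOpen Γ) (c d : ℝ) :
    IntervalIntegrable (Γ.indicator (fun _ => (1 : ℝ))) volume c d := by
  refine (intervalIntegrable_const (c := (1:ℝ))).mono_fun
    (measurable_const.indicator hopen.measurableSet).aestronglyMeasurable ?_
  refine Filter.Eventually.of_forall fun x => ?_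
  simp only [indicator]; split_ifs <;> norm_num

lemma eigen_arc {Γ : Set ℝ} (hopen : IsOpen Γ)
    (hper : ∀ θ, θ ∈ Γ ↔ θ + 2 * Real.pi ∈ Γ) (hne : Γ.Nonempty) (hproper : Γ ≠ Set.univ)
    {a b : ℝ} (ha : 0 ≤ a) (hab : a < b) (hb : b ≤ 2 * Real.pi)
    (hΓ : Γ = {θ : ℝ | ∃ k : ℤ, θ - 2 * Real.pi * k ∈ Set.Ioo a b}) :
    Real.sqrt (circEigen Γ) = Real.pi / (b - a) := by
  have hL : 0 < b - a := by linarith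
  have hpi := Real.pi_pos
  apply le_antisymm
  · apply eigen_upper hab (by linarith)
    intro x hx n
    rw [hΓ]
    exact ⟨n, by simpa using hx⟩
  · have h := eigen_lower hopen hper hne hproper
    have i := ind_ii hopen
    have hout : ∀ x, 0 < x → x < 2 * Real.pi → x ∉ Ioo a b →
        Γ.indicator (fun _ => (1 : ℝ)) x = 0 := by
      intro x h0 h1 h2
      apply indicator_of_notMem
      rw [hΓ]
      rintro ⟨k, hk⟩
      have k1 : (-1 : ℝ) < k := by
        by_contra! hc
        nlinarith [hk.2]
      have k2 : (k : ℝ) < 1 := by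
        by_contra! hc
        nlinarith [hk.1]
      have k1' : -1 < k := by exact_mod_cast k1
      have k2' : k < 1 := by exact_mod_cast k2
      have : k = 0 := by omega
      subst this
      exact h2 (by simpa using hk)
    have e : ∫ θ in (0 : ℝ)..(2 * Real.pi), Γ.indicator (fun _ => (1 : ℝ)) θ ≤ b - a := by
      rw [← intervalIntegral.integral_add_adjacent_intervals (i 0 a) (i a _),
        ← intervalIntegral.integral_add_adjacent_intervals (i a b) (i b _)]
      have e1 : ∫ θ in (0 : ℝ)..a, Γ.indicator (fun _ => (1 : ℝ)) θ = 0 := by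
        rw [intervalIntegral.integral_congr_Ioo_of_le (g := fun _ => 0) ha]
        · simp
        · intro x hx
          exact hout x hx.1 (by linarith [hx.2]) fun h => by linarith [h.1, hx.2]
      have e2 : ∫ θ in b..(2 * Real.pi), Γ.indicator (fun _ => (1 : ℝ)) θ = 0 := by
        rw [intervalIntegral.integral_congr_Ioo_of_le (g := fun _ => 0) hb]
        · simp
        · intro x hx
          exact hout x (by linarith [hx.1]) hx.2 fun h => by linarith [h.2, hx.1]
      have e3 : ∫ θ in a..b, Γ.indicator (fun _ => (1 : ℝ)) θ ≤ ∫ θ in a..b, (1:ℝ) := by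
        refine intervalIntegral.integral_mono_on hab.le (i _ _) (by simp) fun x _ => ?_
        simp only [indicator]; split_ifs <;> norm_num
      rw [intervalIntegral.integral_const, smul_eq_mul, mul_one] at e3
      linarith
    rw [div_le_iff₀ hL]
    exact h.trans (mul_le_mul_of_nonneg_left e (Real.sqrt_nonneg _))

/-- Spectral inequality for disjoint subsets of the circle: `√μ₁ + √μ₂ ≥ 2`, with the minimum
attained for two adjacent complementary arcs of lengths `2πα` and `2π(1-α)`, for which the sum
equals `1/(2α) + 1/(2(1-α)) ≥ 2`. Subsets of the circle are modelled as `2π`-periodic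
subsets of `ℝ`. -/
theorem stmt_18 (Γ₁ Γ₂ : Set ℝ)
    (hopen₁ : IsOpen Γ₁) (hopen₂ : IsOpen Γ₂)
    (hper₁ : ∀ θ, θ ∈ Γ₁ ↔ θ + 2 * Real.pi ∈ Γ₁)
    (hper₂ : ∀ θ, θ ∈ Γ₂ ↔ θ + 2 * Real.pi ∈ Γ₂)
    (hne₁ : Γ₁.Nonempty) (hne₂ : Γ₂.Nonempty)
    (hdisj : Disjoint Γ₁ Γ₂)
    (hproper₁ : Γ₁ ≠ Set.univ) (hproper₂ : Γ₂ ≠ Set.univ) :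
    2 ≤ Real.sqrt (circEigen Γ₁) + Real.sqrt (circEigen Γ₂) ∧
    ∀ α : ℝ, 0 < α → α < 1 →
      Γ₁ = {θ : ℝ | ∃ k : ℤ, θ - 2 * Real.pi * k ∈ Set.Ioo 0 (2 * Real.pi * α)} →
      Γ₂ = {θ : ℝ | ∃ k : ℤ, θ - 2 * Real.pi * k ∈ Set.Ioo (2 * Real.pi * α) (2 * Real.pi)} →
      Real.sqrt (circEigen Γ₁) + Real.sqrt (circEigen Γ₂) =
        1 / (2 * α) + 1 / (2 * (1 - α)) ∧
      2 ≤ 1 / (2 * α) + 1 / (2 * (1 - α)) := by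
  have hpi := Real.pi_pos
  refine ⟨?_, ?_⟩
  · have h1 := eigen_lower hopen₁ hper₁ hne₁ hproper₁
    have h2 := eigen_lower hopen₂ hper₂ hne₂ hproper₂
    have i1 := ind_ii hopen₁ 0 (2 * Real.pi)
    have i2 := ind_ii hopen₂ 0 (2 * Real.pi)
    have hs : (∫ θ in (0 : ℝ)..(2 * Real.pi), Γ₁.indicator (fun _ => (1 : ℝ)) θ) +
        (∫ θ in (0 : ℝ)..(2 * Real.pi), Γ₂.indicator (fun _ => (1 : ℝ)) θ) ≤ 2 * Real.pi := by
      rw [← intervalIntegral.integral_add i1 i2]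
      calc _ ≤ ∫ θ in (0 : ℝ)..(2 * Real.pi), (1 : ℝ) := by
            refine intervalIntegral.integral_mono_on (by positivity) (i1.add i2) (by simp)
              fun x _ => ?_
            by_cases hx : x ∈ Γ₁
            · have : x ∉ Γ₂ := fun h => Set.disjoint_left.1 hdisj hx h
              simp [hx, this]
            · by_cases hx2 : x ∈ Γ₂ <;> simp [hx, hx2]
        _ = _ := by simp
    have n1 : 0 ≤ ∫ θ in (0 : ℝ)..(2 * Real.pi), Γ₁.indicator (fun _ => (1 : ℝ)) θ :=
      intervalIntegral.integral_nonneg (by positivity)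
        fun x _ => indicator_nonneg (fun _ _ => zero_le_one) x
    have n2 : 0 ≤ ∫ θ in (0 : ℝ)..(2 * Real.pi), Γ₂.indicator (fun _ => (1 : ℝ)) θ :=
      intervalIntegral.integral_nonneg (by positivity)
        fun x _ => indicator_nonneg (fun _ _ => zero_le_one) x
    generalize (∫ θ in (0 : ℝ)..(2 * Real.pi), Γ₁.indicator (fun _ => (1 : ℝ)) θ) = m at *
    generalize (∫ θ in (0 : ℝ)..(2 * Real.pi), Γ₂.indicator (fun _ => (1 : ℝ)) θ) = n at *
    have hm : 0 < m := by
      rcases n1.eq_or_lt with h | h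
      · rw [← h, mul_zero] at h1; linarith
      · exact h
    have hn : 0 < n := by
      rcases n2.eq_or_lt with h | h
      · rw [← h, mul_zero] at h2; linarith
      · exact h
    have a1 : Real.pi / m ≤ Real.sqrt (circEigen Γ₁) := by rwa [div_le_iff₀ hm]
    have a2 : Real.pi / n ≤ Real.sqrt (circEigen Γ₂) := by rwa [div_le_iff₀ hn]
    refine le_trans ?_ (add_le_add a1 a2)
    rw [div_add_div _ _ hm.ne' hn.ne', le_div_iff₀ (by positivity)]
    nlinarith [sq_nonneg (m - n), mul_le_mul_of_nonneg_right hs (add_pos hm hn).le]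
  · intro α h0 h1 hΓ₁ hΓ₂
    have hα : 0 < 1 - α := by linarith
    refine ⟨?_, ?_⟩
    · rw [eigen_arc hopen₁ hper₁ hne₁ hproper₁ le_rfl (by positivity) (by nlinarith) hΓ₁,
        eigen_arc hopen₂ hper₂ hne₂ hproper₂ (by positivity) (by nlinarith) le_rfl hΓ₂,
        show 2 * Real.pi - 2 * Real.pi * α = 2 * Real.pi * (1 - α) by ring]
      have := hα.ne'
      rw [sub_zero]
      congr 1 <;> field_simp
    · rw [div_add_div _ _ (by positivity) (by positivity), le_div_iff₀ (by positivity)]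
      nlinarith [sq_nonneg (2 * α - 1)]
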